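/- As δ → 0+, T((1-δ)/e) = 1 - √(2δ) + O(δ), i.e., there exist constants C, δ₀ > 0 such that |T((1-δ)/e) - 1 + √(2δ)| ≤ C·δ for all 0 < δ < δ₀. -/

import Mathlib

open Real

/-- The tree function `T(z) = Σ_{k≥1} k^{k-1} z^k / k!`. -/
noncomputable def treeFun (z : ℝ) : ℝ :=
  ∑' k : ℕ, ((k + 1 : ℕ) : ℝ) ^ k * z ^ (k + 1) / ((k + 1).factorial : ℝ)

/-- The coefficients of `T(z) / z`. -/
noncomputable def treeCoeff (k : ℕ) : ℝ := ((k + 1 : ℕ) : ℝ) ^ k / ((k + 1).factorial : ℝ)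

theorem treeCoeff_nonneg (k : ℕ) : 0 ≤ treeCoeff k := by
  unfold treeCoeff; positivity

theorem treeCoeff_le (k : ℕ) : treeCoeff k ≤ Real.exp 1 ^ (k + 1) := by
  have h1 := Real.pow_div_factorial_le_exp ((k + 1 : ℕ) : ℝ) (by positivity) (k + 1)
  have h2 : Real.exp ((k + 1 : ℕ) : ℝ) = Real.exp 1 ^ (k + 1) := by
    rw [← Real.exp_nat_mul, mul_one]
  rw [h2] at h1
  refine le_trans ?_ h1
  unfold treeCoeff
  gcongr
  · push_cast; linarith [(Nat.cast_nonneg k : (0:ℝ) ≤ k)]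
  · omega

theorem treeFun_eq (z : ℝ) :
    treeFun z = z * FormalMultilinearSeries.ofScalarsSum (E := ℝ) treeCoeff z := by
  rw [FormalMultilinearSeries.ofScalars_sum_eq, ← tsum_mul_left]
  unfold treeFun treeCoeff
  refine tsum_congr fun k => ?_
  rw [smul_eq_mul]
  ring

theorem treeFun_analyticAt (z : ℝ) (hz : |z| < 1 / Real.exp 1) : AnalyticAt ℝ treeFun z := by
  have hfun : treeFun = fun z => z * FormalMultilinearSeries.ofScalarsSum (E := ℝ) treeCoeff z :=
    funext treeFun_eq
  rw [hfun]
  refine analyticAt_id.mul ?_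
  set p := FormalMultilinearSeries.ofScalars ℝ treeCoeff with hp
  let r : NNReal := ⟨1 / Real.exp 1, by positivity⟩
  have hr : (r : ENNReal) ≤ p.radius := by
    refine p.le_radius_of_bound (Real.exp 1) fun n => ?_
    rw [hp, FormalMultilinearSeries.ofScalars_norm, Real.norm_of_nonneg (treeCoeff_nonneg n)]
    change treeCoeff n * (1 / Real.exp 1) ^ n ≤ _
    calc treeCoeff n * (1 / Real.exp 1) ^ n
        ≤ Real.exp 1 ^ (n + 1) * (1 / Real.exp 1) ^ n := by
          gcongr; exact treeCoeff_le n
      _ = Real.exp 1 := by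
          rw [pow_succ, mul_right_comm, ← mul_pow]
          field_simp
          simp
  have hr0 : (0 : ENNReal) < r := by
    rw [ENNReal.coe_pos, ← NNReal.coe_pos]
    change 0 < 1 / Real.exp 1
    positivity
  have hb := (p.hasFPowerSeriesOnBall (hr0.trans_le hr)).mono hr0 hr
  refine hb.analyticAt_of_mem ?_
  rw [Metric.mem_eball, edist_zero_right, enorm_eq_nnnorm, ENNReal.coe_lt_coe, ← NNReal.coe_lt_coe]
  exact hz

theorem fd_sum (n : ℕ) (hn : 1 ≤ n) :
    ∑ k ∈ Finset.range (n + 1),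
      (-1 : ℝ) ^ (n - k) * ((n + 1).choose (k + 1) : ℝ) * ((k : ℝ) + 1) ^ n = 0 := by
  have h := congrFun (fwdDiff_iter_pow_eq_zero_of_lt (R := ℝ) (Nat.lt_succ_self n)) 0
  rw [fwdDiff_iter_eq_sum_shift, Finset.sum_range_succ'] at h
  have h0 : n ≠ 0 := by omega
  simpa [h0] using h

/-- Double family. -/
noncomputable def dbl (x : ℝ) (p : ℕ × ℕ) : ℝ :=
  treeCoeff p.1 * x ^ (p.1 + 1) * ((-(((p.1 + 1 : ℕ) : ℝ) * x)) ^ p.2 / (p.2.factorial : ℝ))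

theorem dbl_hasSum_row (x : ℝ) (k : ℕ) :
    HasSum (fun m => dbl x (k, m)) (treeCoeff k * x ^ (k + 1) * Real.exp (-(((k + 1 : ℕ) : ℝ) * x))) := by
  have h := NormedSpace.expSeries_div_hasSum_exp (-(((k + 1 : ℕ) : ℝ) * x))
  rw [← Real.exp_eq_exp_ℝ] at h
  exact h.mul_left _

theorem dbl_norm_hasSum_row (x : ℝ) (hx : 0 < x) (k : ℕ) :
    HasSum (fun m => ‖dbl x (k, m)‖)
      (treeCoeff k * x ^ (k + 1) * Real.exp (((k + 1 : ℕ) : ℝ) * x)) := by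
  have h := NormedSpace.expSeries_div_hasSum_exp (((k + 1 : ℕ) : ℝ) * x)
  rw [← Real.exp_eq_exp_ℝ] at h
  suffices hfun : (fun m => ‖dbl x (k, m)‖) = fun m : ℕ => treeCoeff k * x ^ (k + 1) *
      ((((k + 1 : ℕ) : ℝ) * x) ^ m / (m.factorial : ℝ)) by
    rw [hfun]; exact h.mul_left _
  funext m
  unfold dbl
  have h1 := treeCoeff_nonneg k
  have h2 : (0:ℝ) ≤ ((k + 1 : ℕ) : ℝ) * x := by positivity
  rw [norm_mul, norm_div, norm_pow, norm_neg, Real.norm_of_nonneg h2,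
    Real.norm_of_nonneg (by positivity : 0 ≤ treeCoeff k * x ^ (k + 1))]
  simp

theorem dbl_summable (x : ℝ) (hx : 0 < x) (hx1 : x < 1 / 5) : Summable (dbl x) := by
  refine Summable.of_norm ?_
  rw [summable_prod_of_nonneg (fun _ => norm_nonneg _)]
  refine ⟨fun k => (dbl_norm_hasSum_row x hx k).summable, ?_⟩
  have hq0 : 0 ≤ Real.exp 1 * x * Real.exp x := by positivity
  have hq1 : Real.exp 1 * x * Real.exp x < 1 := by
    have he := Real.exp_one_lt_d9
    have h2 : Real.exp x ≤ 1 / (1 - x) := Real.exp_bound_div_one_sub_of_interval hx.le (by linarith)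
    have h3 : 1 / (1 - x) ≤ 5 / 4 := by
      rw [div_le_div_iff₀ (by linarith) (by norm_num)]; linarith
    calc Real.exp 1 * x * Real.exp x ≤ 2.8 * (1 / 5) * (5 / 4) := by
          gcongr
          · linarith
          · linarith
      _ < 1 := by norm_num
  refine Summable.of_nonneg_of_le (fun k => tsum_nonneg fun _ => norm_nonneg _) (fun k => ?_)
    ((summable_nat_add_iff 1).2 (summable_geometric_of_lt_one hq0 hq1))
  rw [(dbl_norm_hasSum_row x hx k).tsum_eq, Real.exp_nat_mul, mul_pow, mul_pow]
  gcongr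
  exact treeCoeff_le k

theorem dbl_diag (x : ℝ) (n : ℕ) :
    ∑ p ∈ Finset.HasAntidiagonal.antidiagonal n, dbl x p = if n = 0 then x else 0 := by
  rcases Nat.eq_zero_or_pos n with rfl | hn
  · simp [dbl, treeCoeff]
  rw [if_neg (by omega), Finset.Nat.sum_antidiagonal_eq_sum_range_succ_mk]
  have h := fd_sum n hn
  have h2 : ∀ k ∈ Finset.range (n + 1), dbl x (k, n - k) = x ^ (n + 1) / ((n + 1).factorial : ℝ) *
      ((-1 : ℝ) ^ (n - k) * ((n + 1).choose (k + 1) : ℝ) * ((k : ℝ) + 1) ^ n) := by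
    intro k hk
    obtain ⟨m, rfl⟩ := Nat.exists_eq_add_of_le (Nat.lt_succ_iff.1 (Finset.mem_range.1 hk))
    have hc := Nat.add_choose_mul_factorial_mul_factorial (k + 1) m
    rw [← Nat.choose_symm_add] at hc
    have hc' : ((k + 1 + m).choose (k + 1) : ℝ) * ((k + 1).factorial : ℝ) * (m.factorial : ℝ)
        = ((k + 1 + m).factorial : ℝ) := by exact_mod_cast hc
    have e1 : k + m + 1 = k + 1 + m := by ring
    rw [e1, Nat.add_sub_cancel_left, ← hc']
    have hch : ((k + 1 + m).choose (k + 1) : ℝ) ≠ 0 := by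
      exact_mod_cast (Nat.choose_pos (by omega)).ne'
    have := Nat.factorial_pos (k + 1)
    have f1 : ((k + 1).factorial : ℝ) ≠ 0 := by positivity
    have f2 : (m.factorial : ℝ) ≠ 0 := by positivity
    unfold dbl treeCoeff
    simp only
    rw [neg_pow, mul_pow, pow_add _ k m, pow_add x (k + 1) m]
    push_cast
    field_simp
  rw [Finset.sum_congr rfl h2, ← Finset.mul_sum, h, mul_zero]

theorem treeFun_small (x : ℝ) (hx : 0 < x) (hx1 : x < 1 / 5) :
    treeFun (x * Real.exp (-x)) = x := by
  have hs := dbl_summable x hx hx1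
  have h1 : ∑' p, dbl x p = treeFun (x * Real.exp (-x)) := by
    rw [hs.tsum_prod' (fun k => (dbl_hasSum_row x k).summable)]
    unfold treeFun
    refine tsum_congr fun k => ?_
    rw [(dbl_hasSum_row x k).tsum_eq, ← mul_neg, Real.exp_nat_mul, mul_pow]
    unfold treeCoeff
    ring
  have hs' := (Finset.HasAntidiagonal.sigmaAntidiagonalEquivProd (A := ℕ)).summable_iff.2 hs
  have h2 : ∑' p, dbl x p = x := by
    rw [← (Finset.HasAntidiagonal.sigmaAntidiagonalEquivProd (A := ℕ)).tsum_eq (dbl x)]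
    have h3 := hs'.tsum_sigma' (fun n => (hasSum_fintype _).summable)
    refine h3.trans ?_
    have h4 : ∀ n : ℕ, ∑' c : Finset.HasAntidiagonal.antidiagonal n,
        (dbl x ∘ Finset.HasAntidiagonal.sigmaAntidiagonalEquivProd) ⟨n, c⟩
        = if n = 0 then x else 0 := by
      intro n
      rw [← dbl_diag x n, tsum_fintype, ← Finset.sum_coe_sort (Finset.HasAntidiagonal.antidiagonal n) (dbl x)]
      rfl
    rw [tsum_congr h4, tsum_ite_eq]
  rw [← h1, h2]

theorem treeFun_eq_self (x : ℝ) (hx : 0 < x) (hx1 : x < 1) :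
    treeFun (x * Real.exp (-x)) = x := by
  have hA : AnalyticOnNhd ℝ (fun x : ℝ => treeFun (x * Real.exp (-x))) (Set.Ioo 0 1) := by
    intro y hy
    have hlt : |y * Real.exp (-y)| < 1 / Real.exp 1 := by
      rw [abs_of_pos (mul_pos hy.1 (Real.exp_pos _)), Real.exp_neg, ← div_eq_mul_inv,
        div_lt_div_iff₀ (Real.exp_pos _) (Real.exp_pos _), one_mul]
      have h := Real.add_one_lt_exp (x := y - 1) (by linarith [hy.2])
      rw [sub_add_cancel] at h
      calc y * Real.exp 1 < Real.exp (y - 1) * Real.exp 1 := by gcongr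
        _ = Real.exp y := by rw [← Real.exp_add]; ring_nf
    have hin : AnalyticAt ℝ (fun x : ℝ => x * Real.exp (-x)) y := by fun_prop
    exact AnalyticAt.fun_comp (treeFun_analyticAt _ hlt) hin
  have hB : AnalyticOnNhd ℝ (fun x : ℝ => x) (Set.Ioo 0 1) := fun y _ => analyticAt_id
  refine hA.eqOn_of_preconnected_of_eventuallyEq hB isPreconnected_Ioo
    (z₀ := 1 / 10) (by norm_num) ?_ ⟨hx, hx1⟩
  filter_upwards [Ioo_mem_nhds (a := (0:ℝ)) (b := 1 / 5) (x := 1 / 10) (by norm_num) (by norm_num)]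
    with y hy
  exact treeFun_small y hy.1 hy.2

/-- As `δ → 0⁺`, `T((1-δ)/e) = 1 - √(2δ) + O(δ)`. -/
theorem treeFun_near_critical :
    ∃ C δ₀ : ℝ, 0 < C ∧ 0 < δ₀ ∧ ∀ δ : ℝ, 0 < δ → δ < δ₀ →
      |treeFun ((1 - δ) / Real.exp 1) - 1 + Real.sqrt (2 * δ)| ≤ C * δ := by
  refine ⟨2, 1, by norm_num, by norm_num, fun δ hδ hδ1 => ?_⟩
  have hc : ContinuousOn (fun x : ℝ => x * Real.exp (-x)) (Set.Icc 0 1) := by fun_prop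
  have hmem : (1 - δ) / Real.exp 1 ∈
      Set.Icc ((fun x : ℝ => x * Real.exp (-x)) 0) ((fun x : ℝ => x * Real.exp (-x)) 1) := by
    constructor
    · simp only [zero_mul]
      exact div_nonneg (by linarith) (Real.exp_pos _).le
    · simp only [one_mul, Real.exp_neg]
      rw [div_eq_mul_inv]
      exact mul_le_of_le_one_left (by positivity) (by linarith)
  obtain ⟨x, ⟨hx0, hx1⟩, hx⟩ := intermediate_value_Icc (by norm_num) hc hmem
  simp only at hx
  have hval : x * Real.exp (1 - x) = 1 - δ := by
    rw [sub_eq_add_neg, Real.exp_add, mul_left_comm, hx]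
    field_simp
  have hx0' : 0 < x := by
    rcases hx0.eq_or_lt with h | h
    · rw [← h] at hval; linarith
    · exact h
  have hx1' : x < 1 := by
    rcases hx1.eq_or_lt with h | h
    · rw [h] at hval; simp at hval; linarith
    · exact h
  rw [← hx, treeFun_eq_self x hx0' hx1']
  obtain ⟨y, rfl⟩ : ∃ y, x = 1 - y := ⟨1 - x, by ring⟩
  have hy0 : 0 < y := by linarith
  have hy1 : y < 1 := by linarith
  rw [sub_sub_cancel] at hval
  have hup : δ ≤ y ^ 2 / 2 + y ^ 3 / 2 := by
    have := Real.quadratic_le_exp_of_nonneg hy0.le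
    nlinarith [mul_le_mul_of_nonneg_left this (by linarith : 0 ≤ 1 - y)]
  have hlo : y ^ 2 / 2 ≤ δ := by
    have h := Real.exp_bound' hy0.le hy1.le (n := 3) (by norm_num)
    norm_num [Finset.sum_range_succ, Nat.factorial] at h
    have h3 := mul_le_mul_of_nonneg_left h (by linarith : 0 ≤ 1 - y)
    have : 0 < y ^ 3 := by positivity
    have : 0 < y ^ 4 := by positivity
    nlinarith
  have hs2 : Real.sqrt (2 * δ) ^ 2 = 2 * δ := Real.sq_sqrt (by linarith)
  set s := Real.sqrt (2 * δ) with hs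
  have hs0 : 0 ≤ s := Real.sqrt_nonneg _
  have hys : y ≤ s := by
    apply Real.le_sqrt_of_sq_le
    linarith
  rw [abs_of_nonneg (by linarith)]
  have h5 : s - y ≤ y ^ 2 := by
    by_contra hcon
    push Not at hcon
    nlinarith [mul_lt_mul_of_pos_right hcon hy0, mul_nonneg (sub_nonneg.2 hys) hs0]
  linarith
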